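/- Let μ be an infinite cardinal, let κ = cf(μ), and let 𝒜 be a μ-almost disjoint family of size κ. Then there exists a μ-mad family 𝒜′ ⊇ 𝒜 such that |𝒜′| = 𝔞_μ and ⋃𝒜′ = ⋃𝒜. -/

import Mathlib

/-!
Write `s =* t` when `s` and `t` differ by fewer than `μ` points. A `μ`-mad family stays `μ`-mad when
it is pulled back along an injection into its union and its members are then replaced by almost
equal sets, provided those of size `< μ` are discarded.

Let `ℬ` be a nontrivial `μ`-mad family of least size `𝔞_μ`; one exists because Zorn's lemma extends
`𝒜` to a `μ`-mad family on `⋃₀ 𝒜`. Well-order `𝒜 = {A i | i < cf μ}` and choose distinct `B i ∈ ℬ`.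
As fewer than `cf μ` sets of size `< μ` have a union of size `< μ`, each `A i` is almost equal to
`A i \ ⋃ j < i, A j`, and likewise for the `B i`. Gluing injections between these disjoint pieces
gives an injection `f` on `⋃₀ 𝒜` with `A i =* f⁻¹ (B i)` for all `i`. Pull `ℬ` back along `f`, put
`A i` in place of `f⁻¹ (B i)`, and drop the sets of size `< μ`: the result is a `μ`-mad family
containing `𝒜`. It has size at most `𝔞_μ`, hence exactly `𝔞_μ` by minimality.
-/

universe u
open Cardinal

/-- A family `𝒜` of subsets of `α` is `μ`-almost disjoint: its union has size `μ`,
each member has size `μ`, and distinct members intersect in a set of size `< μ`. -/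
def IsADFamily (μ : Cardinal.{u}) {α : Type u} (𝒜 : Set (Set α)) : Prop :=
  #(⋃₀ 𝒜) = μ ∧ (∀ A ∈ 𝒜, #A = μ) ∧
    ∀ A ∈ 𝒜, ∀ B ∈ 𝒜, A ≠ B → #(↥(A ∩ B)) < μ

/-- `𝒜` is maximal `μ`-almost disjoint: it is `μ`-ad and no new set `C ⊆ ⋃₀ 𝒜`
can be added keeping the family `μ`-almost disjoint. -/
def IsMadFamily (μ : Cardinal.{u}) {α : Type u} (𝒜 : Set (Set α)) : Prop :=
  IsADFamily μ 𝒜 ∧ ¬∃ C, C ⊆ ⋃₀ 𝒜 ∧ C ∉ 𝒜 ∧ IsADFamily μ (insert C 𝒜)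

/-- `MADSet μ` is the set of cardinalities of nontrivial `μ`-mad families,
i.e. `μ`-mad families with at least `cf μ` members. -/
def MADSet (μ : Cardinal.{u}) : Set Cardinal.{u} :=
  {c | ∃ 𝒜 : Set (Set μ.out), IsMadFamily μ 𝒜 ∧ μ.ord.cof ≤ #𝒜 ∧ #𝒜 = c}

open Filter Set
open scoped Function

section Cosmall

variable {μ : Cardinal.{u}} {α β ι : Type u}

/-- The filter dual to the ideal `[α]^{<μ}` of small sets, so that `s =ᶠ[cosmall α hμ] t` is the
usual almost equality `s =* t`. `Filter.cocardinal` does not serve here because it requires `μ` to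
be regular. -/
def cosmall (α : Type u) (hμ : ℵ₀ ≤ μ) : Filter α :=
  comk (fun s ↦ #s < μ) (by simpa using aleph0_pos.trans_le hμ)
    (fun _ ht _ hst ↦ (mk_le_mk_of_subset hst).trans_lt ht)
    (fun _ hs _ ht ↦ (mk_union_le _ _).trans_lt (add_lt_of_lt hμ hs ht))

lemma compl_mem_cosmall (hμ : ℵ₀ ≤ μ) {s : Set α} : sᶜ ∈ cosmall α hμ ↔ #s < μ :=
  compl_mem_comk

lemma eventuallyEq_cosmall_empty (hμ : ℵ₀ ≤ μ) {s : Set α} :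
    s =ᶠ[cosmall α hμ] (∅ : Set α) ↔ #s < μ :=
  eventuallyEq_empty.trans (compl_mem_cosmall hμ)

lemma mk_lt_iff_of_eventuallyEq (hμ : ℵ₀ ≤ μ) {s t : Set α} (h : s =ᶠ[cosmall α hμ] t) :
    #s < μ ↔ #t < μ := by
  rw [← eventuallyEq_cosmall_empty hμ, ← eventuallyEq_cosmall_empty hμ]
  exact ⟨h.symm.trans, h.trans⟩

lemma le_mk_iff_of_eventuallyEq (hμ : ℵ₀ ≤ μ) {s t : Set α} (h : s =ᶠ[cosmall α hμ] t) :
    μ ≤ #s ↔ μ ≤ #t := by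
  simpa only [not_lt] using (mk_lt_iff_of_eventuallyEq hμ h).not

lemma mk_iUnion_lt_of_lt_cof (hμ : ℵ₀ ≤ μ) {s : ι → Set α} (hι : #ι < μ.ord.cof)
    (h : ∀ i, #(s i) < μ) : #(⋃ i, s i) < μ :=
  (mk_iUnion_le s).trans_lt <|
    mul_lt_of_lt hμ (hι.trans_le (Ordinal.cof_ord_le μ)) (iSup_lt_of_lt_cof_ord hι h)

lemma mk_inter_preimage_le_of_injOn {f : α → β} {X : Set α} (hf : InjOn f X) (s : Set β) :
    #(X ∩ f ⁻¹' s : Set α) ≤ #s := by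
  rw [← mk_image_eq_of_injOn f _ (hf.mono inter_subset_left)]
  exact mk_le_mk_of_subset (image_subset_iff.2 inter_subset_right)

lemma tendsto_cosmall_of_injOn (hμ : ℵ₀ ≤ μ) {f : α → β} {X : Set α} (hf : InjOn f X) :
    Tendsto f (cosmall α hμ ⊓ 𝓟 X) (cosmall β hμ) := by
  intro s hs
  rw [← compl_compl s, compl_mem_cosmall] at hs
  rw [mem_map, mem_inf_principal', ← compl_compl (f ⁻¹' s), ← compl_inter, compl_mem_cosmall]
  exact (mk_inter_preimage_le_of_injOn hf sᶜ).trans_lt hs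

lemma inter_preimage_eventuallyEq_of_injOn (hμ : ℵ₀ ≤ μ) {f : α → β} {X : Set α}
    (hf : InjOn f X) {s t : Set β} (h : s =ᶠ[cosmall β hμ] t) :
    (X ∩ f ⁻¹' s : Set α) =ᶠ[cosmall α hμ] (X ∩ f ⁻¹' t : Set α) := by
  have hev := (tendsto_cosmall_of_injOn hμ hf).eventually (eventuallyEq_set.1 h)
  rw [eventually_inf_principal] at hev
  exact eventuallyEq_set.2 (hev.mono fun _ hx ↦ and_congr_right hx)

end Cosmall

section Disjointify

/-- The disjointification `A i \ ⋃ j < i, A j` of a family of sets. `disjointed` does not serve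
here because it requires initial segments of the index type to be finite. -/
def disjointify {ι α : Type*} [Preorder ι] (A : ι → Set α) (i : ι) : Set α :=
  A i \ ⋃ j : Iio i, A j

lemma disjointify_subset {ι α : Type*} [Preorder ι] (A : ι → Set α) (i : ι) :
    disjointify A i ⊆ A i :=
  sdiff_subset

lemma pairwise_disjoint_disjointify {ι α : Type*} [LinearOrder ι] (A : ι → Set α) :
    Pairwise (Disjoint on disjointify A) := by
  refine (pairwise_disjoint_on _).2 fun i j hij ↦ disjoint_left.2 fun x hi hj ↦ hj.2 ?_
  exact mem_iUnion.2 ⟨⟨i, hij⟩, disjointify_subset A i hi⟩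

lemma iUnion_disjointify {ι α : Type*} [Preorder ι] [WellFoundedLT ι] (A : ι → Set α) :
    ⋃ i, disjointify A i = ⋃ i, A i := by
  refine (iUnion_mono (disjointify_subset A)).antisymm fun x hx ↦ ?_
  obtain ⟨i, hi, hmin⟩ := wellFounded_lt.has_min {i | x ∈ A i} (mem_iUnion.1 hx)
  refine mem_iUnion.2 ⟨i, hi, fun hlt ↦ ?_⟩
  obtain ⟨⟨j, hj⟩, hxj⟩ := mem_iUnion.1 hlt
  exact hmin j hxj hj

lemma disjointify_eventuallyEq {μ : Cardinal.{u}} {α ι : Type u} [Preorder ι] (hμ : ℵ₀ ≤ μ)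
    {A : ι → Set α} {i : ι} (hι : #(Iio i) < μ.ord.cof) (hA : ∀ j < i, #(A i ∩ A j : Set α) < μ) :
    disjointify A i =ᶠ[cosmall α hμ] A i := by
  have hsmall : (A i ∩ ⋃ j : Iio i, A j : Set α) =ᶠ[cosmall α hμ] (∅ : Set α) := by
    rw [eventuallyEq_cosmall_empty, inter_iUnion]
    exact mk_iUnion_lt_of_lt_cof hμ hι fun j ↦ hA j j.2
  simpa only [disjointify, sdiff_self_inter, sdiff_empty] using
    (EventuallyEq.refl (cosmall α hμ) (A i)).diff hsmall

end Disjointify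

section Matching

lemma exists_injOn_mapsTo_of_mk_le {α β : Type u} [Nonempty β] {s : Set α} {t : Set β}
    (h : #s ≤ #t) : ∃ f : α → β, InjOn f s ∧ MapsTo f s t := by
  obtain ⟨e⟩ : Nonempty (s ↪ t) := h
  let f : α → β :=
    Function.extend Subtype.val (fun x ↦ (e x : β)) fun _ ↦ Classical.arbitrary β
  have hf (x : s) : f x = e x := Subtype.val_injective.extend_apply _ _ x
  refine ⟨f, fun x hx y hy hxy ↦ ?_, fun x hx ↦ hf ⟨x, hx⟩ ▸ (e ⟨x, hx⟩).2⟩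
  have hexy : e ⟨x, hx⟩ = e ⟨y, hy⟩ :=
    Subtype.ext ((hf ⟨x, hx⟩).symm.trans (hxy.trans (hf ⟨y, hy⟩)))
  exact congrArg Subtype.val (e.injective hexy)

lemma exists_injOn_iUnion_mapsTo {ι α β : Type*} [Nonempty β] {A : ι → Set α} {B : ι → Set β}
    (hA : Pairwise (Disjoint on A)) (hB : Pairwise (Disjoint on B))
    (h : ∀ i, ∃ f : α → β, InjOn f (A i) ∧ MapsTo f (A i) (B i)) :
    ∃ f : α → β, InjOn f (⋃ i, A i) ∧ ∀ i, MapsTo f (A i) (B i) := by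
  classical
  choose g hinj hmaps using h
  let f : α → β := fun x ↦ if hx : ∃ i, x ∈ A i then g hx.choose x else Classical.arbitrary β
  have hfg (i : ι) : EqOn f (g i) (A i) := fun x hx ↦ by
    have hex : ∃ i, x ∈ A i := ⟨i, hx⟩
    have hi : hex.choose = i := hA.eq (not_disjoint_iff.2 ⟨x, hex.choose_spec, hx⟩)
    simp only [f, dif_pos hex, hi]
  have hf (i : ι) : MapsTo f (A i) (B i) := (hmaps i).congr (hfg i).symm
  refine ⟨f, fun x hx y hy hxy ↦ ?_, hf⟩
  obtain ⟨i, hi⟩ := mem_iUnion.1 hx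
  obtain ⟨j, hj⟩ := mem_iUnion.1 hy
  obtain rfl : i = j := hB.eq (not_disjoint_iff.2 ⟨f x, hf i hi, hxy ▸ hf j hj⟩)
  exact (hinj i).congr (hfg i).symm hi hj hxy

lemma iUnion_inter_preimage_eq {ι α β : Type*} {A : ι → Set α} {B : ι → Set β} {f : α → β}
    (hB : Pairwise (Disjoint on B)) (hf : ∀ i, MapsTo f (A i) (B i)) (i : ι) :
    (⋃ j, A j) ∩ f ⁻¹' B i = A i := by
  refine Subset.antisymm (fun x ⟨hx, hxB⟩ ↦ ?_) fun x hx ↦ ⟨mem_iUnion_of_mem i hx, hf i hx⟩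
  obtain ⟨j, hj⟩ := mem_iUnion.1 hx
  obtain rfl : j = i := hB.eq (not_disjoint_iff.2 ⟨f x, hf j hj, hxB⟩)
  exact hj

lemma exists_injOn_iUnion_eventuallyEq_preimage {μ : Cardinal.{u}} {ι α β : Type u} [Nonempty β]
    (hμ : ℵ₀ ≤ μ) (hι : #ι ≤ μ.ord.cof) {A : ι → Set α} {B : ι → Set β}
    (hA : ∀ i, #(A i) ≤ μ) (hB : ∀ i, μ ≤ #(B i))
    (hAA : Pairwise fun i j ↦ #(A i ∩ A j : Set α) < μ)
    (hBB : Pairwise fun i j ↦ #(B i ∩ B j : Set β) < μ) :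
    ∃ f : α → β, InjOn f (⋃ i, A i) ∧ MapsTo f (⋃ i, A i) (⋃ i, B i) ∧
      ∀ i, A i =ᶠ[cosmall α hμ] ((⋃ j, A j) ∩ f ⁻¹' B i : Set α) := by
  obtain ⟨_, _, hord⟩ := exists_ord_eq_type_lt ι
  have hIio (i : ι) : #(Iio i) < μ.ord.cof := (mk_Iio_lt i hord).trans_le hι
  have hA' (i : ι) : disjointify A i =ᶠ[cosmall α hμ] A i :=
    disjointify_eventuallyEq hμ (hIio i) fun _ hj ↦ hAA hj.ne'
  have hB' (i : ι) : disjointify B i =ᶠ[cosmall β hμ] B i :=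
    disjointify_eventuallyEq hμ (hIio i) fun _ hj ↦ hBB hj.ne'
  have hle (i : ι) : #(disjointify A i) ≤ #(disjointify B i) :=
    ((mk_le_mk_of_subset (disjointify_subset A i)).trans (hA i)).trans
      ((le_mk_iff_of_eventuallyEq hμ (hB' i)).2 (hB i))
  obtain ⟨f, hinj, hmaps⟩ := exists_injOn_iUnion_mapsTo (pairwise_disjoint_disjointify A)
    (pairwise_disjoint_disjointify B) fun i ↦ exists_injOn_mapsTo_of_mk_le (hle i)
  have hpre := iUnion_inter_preimage_eq (pairwise_disjoint_disjointify B) hmaps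
  rw [iUnion_disjointify] at hinj hpre
  refine ⟨f, hinj, ?_, fun i ↦ ?_⟩
  · rw [← iUnion_disjointify A, ← iUnion_disjointify B]
    exact mapsTo_iUnion_iUnion hmaps
  · have hi := inter_preimage_eventuallyEq_of_injOn hμ hinj (hB' i)
    rw [hpre i] at hi
    exact (hA' i).symm.trans hi

end Matching

section Mad

variable {μ : Cardinal.{u}} {α β : Type u} {𝒜 : Set (Set α)} {ℬ : Set (Set β)}

lemma IsADFamily.insert_iff (had : IsADFamily μ 𝒜) {C : Set α} (hC : C ⊆ ⋃₀ 𝒜) (hC𝒜 : C ∉ 𝒜) :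
    IsADFamily μ (insert C 𝒜) ↔ #C = μ ∧ ∀ A ∈ 𝒜, #(C ∩ A : Set α) < μ := by
  refine ⟨fun h ↦ ⟨h.2.1 C (mem_insert _ _), fun A hA ↦ ?_⟩, fun ⟨hCμ, hsmall⟩ ↦ ⟨?_, ?_, ?_⟩⟩
  · exact h.2.2 C (mem_insert _ _) A (mem_insert_of_mem _ hA) (ne_of_mem_of_not_mem hA hC𝒜).symm
  · rw [sUnion_insert, union_eq_self_of_subset_left hC, had.1]
  · exact forall_mem_insert.2 ⟨hCμ, had.2.1⟩
  · rintro A (rfl | hA) B (rfl | hB) hne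
    · exact absurd rfl hne
    · exact hsmall B hB
    · rw [inter_comm]
      exact hsmall A hA
    · exact had.2.2 A hA B hB hne

lemma isMadFamily_iff :
    IsMadFamily μ 𝒜 ↔
      IsADFamily μ 𝒜 ∧ ∀ C ⊆ ⋃₀ 𝒜, #C = μ → ∃ A ∈ 𝒜, μ ≤ #(C ∩ A : Set α) := by
  refine and_congr_right fun had ↦ ⟨fun hmax C hC hCμ ↦ ?_, ?_⟩
  · by_contra! hsmall
    have hC𝒜 : C ∉ 𝒜 := fun h ↦ by
      simpa only [inter_self, hCμ, lt_irrefl] using hsmall C h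
    exact hmax ⟨C, hC, hC𝒜, (had.insert_iff hC hC𝒜).2 ⟨hCμ, hsmall⟩⟩
  · rintro hmeet ⟨C, hC, hC𝒜, hins⟩
    obtain ⟨hCμ, hsmall⟩ := (had.insert_iff hC hC𝒜).1 hins
    obtain ⟨A, hA, hle⟩ := hmeet C hC hCμ
    exact hle.not_gt (hsmall A hA)

lemma IsADFamily.sUnion_of_isChain {c : Set (Set (Set α))} {X : Set α} (hne : c.Nonempty)
    (hc : IsChain (· ⊆ ·) c) (had : ∀ 𝒟 ∈ c, IsADFamily μ 𝒟) (hX : ∀ 𝒟 ∈ c, ⋃₀ 𝒟 = X) :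
    IsADFamily μ (⋃₀ c) ∧ ⋃₀ ⋃₀ c = X := by
  obtain ⟨𝒟₀, h𝒟₀⟩ := hne
  have hcX : ⋃₀ ⋃₀ c = X := by
    refine (sUnion_subset ?_).antisymm ?_
    · rintro A ⟨𝒟, h𝒟, hA⟩
      exact (subset_sUnion_of_mem hA).trans (hX 𝒟 h𝒟).subset
    · rw [← hX 𝒟₀ h𝒟₀]
      exact sUnion_mono (subset_sUnion_of_mem h𝒟₀)
  refine ⟨⟨?_, ?_, ?_⟩, hcX⟩
  · rw [hcX, ← hX 𝒟₀ h𝒟₀, (had 𝒟₀ h𝒟₀).1]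
  · rintro A ⟨𝒟, h𝒟, hA⟩
    exact (had 𝒟 h𝒟).2.1 A hA
  · have hpair : (⋃₀ c).Pairwise fun A B ↦ #(A ∩ B : Set α) < μ :=
      hc.pairwise_sUnion.2 fun 𝒟 h𝒟 A hA B hB ↦ (had 𝒟 h𝒟).2.2 A hA B hB
    exact fun A hA B hB ↦ hpair hA hB

lemma IsADFamily.exists_isMadFamily (had : IsADFamily μ 𝒜) :
    ∃ 𝒟, 𝒜 ⊆ 𝒟 ∧ IsMadFamily μ 𝒟 := by
  obtain ⟨𝒟, h𝒜𝒟, hmax⟩ := zorn_subset_nonempty {𝒟 | IsADFamily μ 𝒟 ∧ ⋃₀ 𝒟 = ⋃₀ 𝒜}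
    (fun c hc hchain hne ↦ ⟨⋃₀ c,
      IsADFamily.sUnion_of_isChain hne hchain (fun _ h ↦ (hc h).1) fun _ h ↦ (hc h).2,
      fun _ ↦ subset_sUnion_of_mem⟩) 𝒜 ⟨had, rfl⟩
  refine ⟨𝒟, h𝒜𝒟, hmax.prop.1, ?_⟩
  rintro ⟨C, hC, hC𝒟, hins⟩
  refine hC𝒟 (hmax.le_of_ge ⟨hins, ?_⟩ (subset_insert _ _) (mem_insert _ _))
  rw [sUnion_insert, union_eq_self_of_subset_left hC, hmax.prop.2]

-- Discarding the members smaller than `μ` costs nothing: they cannot witness maximality.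
lemma IsMadFamily.of_eventuallyEq_preimage (hμ : ℵ₀ ≤ μ) (hℬ : IsMadFamily μ ℬ) {f : α → β}
    {X : Set α} (hX : #X = μ) (hinj : InjOn f X) (hmaps : MapsTo f X (⋃₀ ℬ))
    {Q : Set β → Set α} (hQX : ∀ B ∈ ℬ, Q B ⊆ X)
    (hQ : ∀ B ∈ ℬ, Q B =ᶠ[cosmall α hμ] (X ∩ f ⁻¹' B : Set α)) :
    IsMadFamily μ {P ∈ Q '' ℬ | #P = μ} := by
  rw [isMadFamily_iff] at hℬ
  obtain ⟨hℬad, hℬmeet⟩ := hℬ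
  have hmeet (C : Set α) (hC : C ⊆ X) (hCμ : #C = μ) :
      ∃ P ∈ {P ∈ Q '' ℬ | #P = μ}, μ ≤ #(C ∩ P : Set α) := by
    obtain ⟨B, hB, hle⟩ := hℬmeet (f '' C) (image_subset_iff.2 (hmaps.mono_left hC))
      ((mk_image_eq_of_injOn f C (hinj.mono hC)).trans hCμ)
    have hCB : μ ≤ #(C ∩ (X ∩ f ⁻¹' B) : Set α) := by
      rw [← inter_assoc, inter_eq_self_of_subset_left hC]
      rw [← image_inter_preimage] at hle
      exact hle.trans mk_image_le
    have hCQ : μ ≤ #(C ∩ Q B : Set α) :=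
      (le_mk_iff_of_eventuallyEq hμ ((EventuallyEq.refl _ C).inter (hQ B hB))).2 hCB
    refine ⟨Q B, ⟨mem_image_of_mem Q hB, ?_⟩, hCQ⟩
    exact ((mk_le_mk_of_subset (hQX B hB)).trans hX.le).antisymm
      (hCQ.trans (mk_le_mk_of_subset inter_subset_right))
  have hsub : ⋃₀ {P ∈ Q '' ℬ | #P = μ} ⊆ X := by
    refine sUnion_subset ?_
    rintro _ ⟨⟨B, hB, rfl⟩, -⟩
    exact hQX B hB
  refine isMadFamily_iff.2 ⟨⟨?_, fun P hP ↦ hP.2, ?_⟩, fun C hC ↦ hmeet C (hC.trans hsub)⟩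
  · obtain ⟨P, hP, -⟩ := hmeet X Subset.rfl hX
    exact ((mk_le_mk_of_subset hsub).trans hX.le).antisymm
      (hP.2.ge.trans (mk_le_mk_of_subset (subset_sUnion_of_mem hP)))
  · rintro _ ⟨⟨B, hB, rfl⟩, -⟩ _ ⟨⟨B', hB', rfl⟩, -⟩ hne
    rw [mk_lt_iff_of_eventuallyEq hμ ((hQ B hB).inter (hQ B' hB')), ← inter_inter_distrib_left,
      ← preimage_inter]
    exact (mk_inter_preimage_le_of_injOn hinj _).trans_lt
      (hℬad.2.2 B hB B' hB' (ne_of_apply_ne Q hne))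

lemma IsMadFamily.mk_mem_MADSet (hμ : ℵ₀ ≤ μ) (h : IsMadFamily μ 𝒜) (hcof : μ.ord.cof ≤ #𝒜) :
    #𝒜 ∈ MADSet μ := by
  obtain ⟨e⟩ : Nonempty (μ.out ≃ ⋃₀ 𝒜) := by
    rw [← Cardinal.eq, mk_out, h.1.1]
  let g : μ.out → α := Subtype.val ∘ e
  have hg : Function.Injective g := Subtype.val_injective.comp e.injective
  have hrange : range g = ⋃₀ 𝒜 := by
    rw [e.surjective.range_comp, Subtype.range_coe]
  have hsub (A) (hA : A ∈ 𝒜) : A ⊆ range g := hrange ▸ subset_sUnion_of_mem hA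
  have hsize : {P ∈ preimage g '' 𝒜 | #P = μ} = preimage g '' 𝒜 := by
    refine sep_eq_self_iff_mem_true.2 ?_
    rintro _ ⟨A, hA, rfl⟩
    rw [mk_preimage_of_injective_of_subset_range g A hg (hsub A hA), h.1.2.1 A hA]
  have hmad : IsMadFamily μ {P ∈ preimage g '' 𝒜 | #P = μ} :=
    h.of_eventuallyEq_preimage hμ (mk_univ.trans (mk_out μ)) hg.injOn
      (fun x _ ↦ hrange ▸ mem_range_self x) (fun _ _ ↦ subset_univ _)
      fun A _ ↦ .of_eq (univ_inter _).symm
  have hcard : #(preimage g '' 𝒜) = #𝒜 := mk_image_eq_of_injOn _ _ (injOn_preimage hsub)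
  exact ⟨_, hsize ▸ hmad, hcard ▸ hcof, hcard⟩

lemma IsADFamily.exists_injOn_eventuallyEq_preimage (hμ : ℵ₀ ≤ μ) (h𝒜 : IsADFamily μ 𝒜)
    (h𝒜cof : #𝒜 ≤ μ.ord.cof) (hℬ : IsADFamily μ ℬ) (h𝒜ℬ : #𝒜 ≤ #ℬ) :
    ∃ (b : 𝒜 ↪ ℬ) (f : α → β), InjOn f (⋃₀ 𝒜) ∧ MapsTo f (⋃₀ 𝒜) (⋃₀ ℬ) ∧
      ∀ A : 𝒜, (A : Set α) =ᶠ[cosmall α hμ] (⋃₀ 𝒜 ∩ f ⁻¹' b A : Set α) := by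
  have : Nonempty β := by
    have hpos : #(⋃₀ ℬ) ≠ 0 := hℬ.1 ▸ (aleph0_pos.trans_le hμ).ne'
    exact (mk_ne_zero_iff.1 hpos).map Subtype.val
  obtain ⟨b⟩ : Nonempty (𝒜 ↪ ℬ) := h𝒜ℬ
  obtain ⟨f, hinj, hmaps, hAb⟩ := exists_injOn_iUnion_eventuallyEq_preimage hμ h𝒜cof
    (A := fun A : 𝒜 ↦ (A : Set α)) (B := fun A : 𝒜 ↦ (b A : Set β))
    (fun A ↦ (h𝒜.2.1 A A.2).le) (fun A ↦ (hℬ.2.1 _ (b A).2).ge)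
    (fun A A' hne ↦ h𝒜.2.2 A A.2 A' A'.2 (Subtype.coe_ne_coe.2 hne))
    (fun A A' hne ↦ hℬ.2.2 _ (b A).2 _ (b A').2 (Subtype.coe_ne_coe.2 (b.injective.ne hne)))
  rw [← sUnion_eq_iUnion] at hinj hmaps hAb
  exact ⟨b, f, hinj, hmaps.mono_right (iUnion_subset fun A ↦ subset_sUnion_of_mem (b A).2), hAb⟩

lemma IsADFamily.exists_isMadFamily_mk_le (hμ : ℵ₀ ≤ μ) (h𝒜 : IsADFamily μ 𝒜)
    (h𝒜cof : #𝒜 ≤ μ.ord.cof) (hℬ : IsMadFamily μ ℬ) (h𝒜ℬ : #𝒜 ≤ #ℬ) :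
    ∃ 𝒜', 𝒜 ⊆ 𝒜' ∧ IsMadFamily μ 𝒜' ∧ #𝒜' ≤ #ℬ ∧ ⋃₀ 𝒜' = ⋃₀ 𝒜 := by
  obtain ⟨e, f, hinj, hmaps, hAe⟩ :=
    h𝒜.exists_injOn_eventuallyEq_preimage hμ h𝒜cof hℬ.1 h𝒜ℬ
  let b : 𝒜 → Set β := Subtype.val ∘ e
  have hb : Function.Injective b := Subtype.val_injective.comp e.injective
  let Q : Set β → Set α := Function.extend b Subtype.val fun B ↦ ⋃₀ 𝒜 ∩ f ⁻¹' B
  have hQb (A : 𝒜) : Q (b A) = A := hb.extend_apply _ _ A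
  have hQ_of_notMem {B : Set β} (hB : ¬∃ A, b A = B) : Q B = ⋃₀ 𝒜 ∩ f ⁻¹' B :=
    Function.extend_apply' _ _ B hB
  have hQX (B : Set β) : Q B ⊆ ⋃₀ 𝒜 := by
    by_cases hB : ∃ A, b A = B
    · obtain ⟨A, rfl⟩ := hB
      exact hQb A ▸ subset_sUnion_of_mem A.2
    · exact hQ_of_notMem hB ▸ inter_subset_left
  have hQ (B : Set β) : Q B =ᶠ[cosmall α hμ] (⋃₀ 𝒜 ∩ f ⁻¹' B : Set α) := by
    by_cases hB : ∃ A, b A = B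
    · obtain ⟨A, rfl⟩ := hB
      exact hQb A ▸ hAe A
    · exact .of_eq (hQ_of_notMem hB)
  have h𝒜Q : 𝒜 ⊆ {P ∈ Q '' ℬ | #P = μ} := fun A hA ↦
    ⟨⟨b ⟨A, hA⟩, (e ⟨A, hA⟩).2, hQb ⟨A, hA⟩⟩, h𝒜.2.1 A hA⟩
  refine ⟨_, h𝒜Q, hℬ.of_eventuallyEq_preimage hμ h𝒜.1 hinj hmaps (fun B _ ↦ hQX B)
    fun B _ ↦ hQ B, (mk_le_mk_of_subset (sep_subset _ _)).trans mk_image_le,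
    (sUnion_subset ?_).antisymm (sUnion_mono h𝒜Q)⟩
  rintro _ ⟨⟨B, -, rfl⟩, -⟩
  exact hQX B

end Mad

/-- Every μ-ad family of size cf(μ) extends to a μ-mad family of size 𝔞_μ
with the same union. -/
theorem stmt4 (μ : Cardinal.{u}) (hμ : ℵ₀ ≤ μ) {α : Type u} (𝒜 : Set (Set α))
    (had : IsADFamily μ 𝒜) (hcard : #𝒜 = μ.ord.cof) :
    ∃ 𝒜' : Set (Set α), 𝒜 ⊆ 𝒜' ∧ IsMadFamily μ 𝒜' ∧ #𝒜' = sInf (MADSet μ) ∧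
      ⋃₀ 𝒜' = ⋃₀ 𝒜 := by
  have mk_mem {𝒟 : Set (Set α)} (h𝒜𝒟 : 𝒜 ⊆ 𝒟) (h𝒟 : IsMadFamily μ 𝒟) : #𝒟 ∈ MADSet μ :=
    h𝒟.mk_mem_MADSet hμ (hcard ▸ mk_le_mk_of_subset h𝒜𝒟)
  obtain ⟨𝒟, h𝒜𝒟, h𝒟⟩ := had.exists_isMadFamily
  obtain ⟨ℬ, hℬ, hcof, hmin⟩ := csInf_mem ⟨_, mk_mem h𝒜𝒟 h𝒟⟩
  obtain ⟨𝒜', h𝒜𝒜', h𝒜', hle, hU⟩ :=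
    had.exists_isMadFamily_mk_le hμ hcard.le hℬ (hcard.trans_le hcof)
  exact ⟨𝒜', h𝒜𝒜', h𝒜', (hle.trans_eq hmin).antisymm (csInf_le' (mk_mem h𝒜𝒜' h𝒜')), hU⟩
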